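/- There exists an absolute constant K such that for every continuous strictly convex function f : ℝ → ℝ and all finite sets A, C ⊂ ℝ with |A|/2 ≤ |C| ≤ 2|A| and |A| ≥ 2, one has |f(A)+C|^6 · |A−A|^5 ≥ K · |A|^{14} / (log|A|)^2. -/

import Mathlib

open Finset Pointwise

noncomputable def dlt (X Y : Finset ℝ) (s : ℝ) : ℕ :=
  ((X ×ˢ Y).filter (fun p => p.1 - p.2 = s)).card

noncomputable def sg (X Y : Finset ℝ) (s : ℝ) : ℕ :=
  ((X ×ˢ Y).filter (fun p => p.1 + p.2 = s)).card

noncomputable def En (X Y : Finset ℝ) : ℝ :=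
  ∑ s ∈ X - X, (dlt X X s : ℝ) * (dlt Y Y s : ℝ)

noncomputable def E3 (X : Finset ℝ) : ℝ :=
  ∑ s ∈ X - X, (dlt X X s : ℝ) ^ 3

noncomputable def E15 (X : Finset ℝ) : ℝ :=
  ∑ s ∈ X - X, (dlt X X s : ℝ) ^ ((3 : ℝ) / 2)

/-!
Suppose that `f` is strictly convex and monotone on `A`. Two translates of its graph over `A` meet
in at most one point. Cutting the plane into a grid adapted to `B` and `f(A) + C` and counting the
pairs of points of the translated graphs that share a cell therefore gives a bound of
Szemerédi–Trotter type: at most `O(|f(A) + C|² |B|² / (|C| τ³))` elements have at least `τ`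
representations as a difference `a - b` with `a ∈ A`, `b ∈ B`. Summing over `τ` bounds the third
moment energy `E₃(A)` (for `B = A`) and the additive energy `E(A, A - A)` (for `B = A - A`).

In the other direction, with `Aₛ = A ∩ (A + s)` the Katz–Koester inclusion
`Aₛ - A ⊆ (A - A) ∩ ((A - A) + s)`, the Cauchy–Schwarz inequality for each `s` and Hölder's
inequality over `s ∈ A - A` give `|A|⁸ ≤ |A - A| E₃(A) E(A, A - A)`. A strictly convex function is
monotone on either side of its minimum on `A`, which reduces the theorem to the monotone case.
-/

open scoped Combinatorics.Additive

section Holder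

variable {R : Type*} [CommRing R] [LinearOrder R] [IsStrictOrderedRing R]

lemma three_mul_le_add_add_of_pow_three_le {p q r z : R} (hp : 0 ≤ p) (hq : 0 ≤ q) (hr : 0 ≤ r)
    (h : z ^ 3 ≤ p * q * r) : 3 * z ≤ p + q + r := by
  refine le_of_pow_le_pow_left₀ three_ne_zero (by positivity) ?_
  nlinarith [mul_nonneg hp (sq_nonneg (q - r)), mul_nonneg hq (sq_nonneg (r - p)),
    mul_nonneg hr (sq_nonneg (p - q)), mul_nonneg (add_nonneg (add_nonneg hp hq) hr)
      (add_nonneg (add_nonneg (sq_nonneg (p - q)) (sq_nonneg (q - r))) (sq_nonneg (r - p)))]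

lemma add_pow_three_le_mul_add {x a b c X A B C : R} (hx : 0 ≤ x) (ha : 0 ≤ a) (hb : 0 ≤ b)
    (hc : 0 ≤ c) (hX : 0 ≤ X) (hA : 0 ≤ A) (hB : 0 ≤ B) (hC : 0 ≤ C) (h : x ^ 3 ≤ a * b * c)
    (H : X ^ 3 ≤ A * B * C) : (x + X) ^ 3 ≤ (a + A) * (b + B) * (c + C) := by
  have hxxX : 3 * (x ^ 2 * X) ≤ a * b * C + a * B * c + A * b * c := by
    refine three_mul_le_add_add_of_pow_three_le (by positivity) (by positivity) (by positivity) ?_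
    calc (x ^ 2 * X) ^ 3 = (x ^ 3) ^ 2 * X ^ 3 := by ring
      _ ≤ (a * b * c) ^ 2 * (A * B * C) := by gcongr
      _ = a * b * C * (a * B * c) * (A * b * c) := by ring
  have hxXX : 3 * (x * X ^ 2) ≤ a * B * C + A * b * C + A * B * c := by
    refine three_mul_le_add_add_of_pow_three_le (by positivity) (by positivity) (by positivity) ?_
    calc (x * X ^ 2) ^ 3 = x ^ 3 * (X ^ 3) ^ 2 := by ring
      _ ≤ a * b * c * (A * B * C) ^ 2 := by gcongr
      _ = a * B * C * (A * b * C) * (A * B * c) := by ring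
  linear_combination h + H + hxxX + hxXX

lemma sum_pow_three_le_sum_mul_sum_mul_sum {ι : Type*} (I : Finset ι) {x a b c : ι → R}
    (hx : ∀ i ∈ I, 0 ≤ x i) (ha : ∀ i ∈ I, 0 ≤ a i) (hb : ∀ i ∈ I, 0 ≤ b i)
    (hc : ∀ i ∈ I, 0 ≤ c i) (h : ∀ i ∈ I, x i ^ 3 ≤ a i * b i * c i) :
    (∑ i ∈ I, x i) ^ 3 ≤ (∑ i ∈ I, a i) * (∑ i ∈ I, b i) * ∑ i ∈ I, c i := by
  classical
  induction I using Finset.induction_on with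
  | empty => simp
  | insert i I hi ih =>
    simp only [forall_mem_insert] at hx ha hb hc h
    simp only [sum_insert hi]
    exact add_pow_three_le_mul_add hx.1 ha.1 hb.1 hc.1 (sum_nonneg hx.2) (sum_nonneg ha.2)
      (sum_nonneg hb.2) (sum_nonneg hc.2) h.1 (ih hx.2 ha.2 hb.2 hc.2 h.2)

end Holder

section Energy

variable {G : Type*} [AddCommGroup G] [DecidableEq G]

lemma card_filter_sub_eq (A B : Finset G) (s : G) :
    #{p ∈ A ×ˢ B | p.1 - p.2 = s} = #(A ∩ (s +ᵥ B)) := by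
  rw [card_inter_vadd, card_sub_eq]

lemma inter_vadd_nonempty_iff {A B : Finset G} {s : G} :
    (A ∩ (s +ᵥ B)).Nonempty ↔ s ∈ A - B := by
  rw [← card_pos, card_inter_vadd, addConvolution_pos, sub_eq_add_neg]

lemma sum_card_inter_vadd {A B T : Finset G} (hT : A - B ⊆ T) :
    ∑ s ∈ T, #(A ∩ (s +ᵥ B)) = #A * #B := by
  simp_rw [← card_filter_sub_eq, ← card_product]
  exact (card_eq_sum_card_fiberwise fun p hp =>
    hT (sub_mem_sub (mem_product.1 hp).1 (mem_product.1 hp).2)).symm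

lemma inter_vadd_inter_vadd_comm (A : Finset G) (s t : G) :
    A ∩ (s +ᵥ A) ∩ (t +ᵥ (A ∩ (s +ᵥ A))) = A ∩ (t +ᵥ A) ∩ (s +ᵥ (A ∩ (t +ᵥ A))) := by
  rw [vadd_finset_inter, vadd_finset_inter, inter_inter_inter_comm, vadd_comm]

lemma addEnergy_neg_right (A B : Finset G) : E[A, -B] = E[A, B] := by
  refine card_nbij' (fun x => (x.1, (-x.2.2, -x.2.1))) (fun x => (x.1, (-x.2.2, -x.2.1)))
    ?_ ?_ (fun _ _ => by simp) (fun _ _ => by simp)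
  all_goals
    rintro ⟨⟨a, a'⟩, b, b'⟩ hx
    simp only [coe_filter, mem_product, mem_neg', neg_neg, Set.mem_ofPred_eq] at hx ⊢
    refine ⟨⟨hx.1.1, hx.1.2.symm⟩, ?_⟩
    rw [← sub_eq_add_neg, ← sub_eq_add_neg, sub_eq_sub_iff_add_eq_add, hx.2]

lemma addEnergy_eq_sum_sq_card_inter_vadd (A B : Finset G) :
    E[A, B] = ∑ t ∈ A - B, #(A ∩ (t +ᵥ B)) ^ 2 := by
  rw [← addEnergy_neg_right, addEnergy_eq_sum_sq', ← sub_eq_add_neg]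
  simp_rw [card_add_eq, card_inter_vadd]

lemma addEnergy_eq_sum_card_mul_card (A B : Finset G) :
    E[A, B] = ∑ s ∈ A - A, #(A ∩ (s +ᵥ A)) * #(B ∩ (s +ᵥ B)) := by
  rw [addEnergy, card_eq_sum_card_fiberwise (f := fun x => x.1.1 - x.1.2) (t := A - A)]
  · refine sum_congr rfl fun s _ => ?_
    rw [← card_filter_sub_eq, ← card_filter_sub_eq, ← card_product]
    refine card_nbij' (fun x => (x.1, x.2.swap)) (fun x => (x.1, x.2.swap)) ?_ ?_
      (fun _ _ => by simp) (fun _ _ => by simp)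
    all_goals
      rintro ⟨⟨a, a'⟩, b, b'⟩ hx
      simp only [coe_filter, coe_product, Set.mem_prod, mem_filter, mem_product,
        Set.mem_ofPred_eq, Prod.swap, ← sub_eq_sub_iff_add_eq_add] at hx ⊢
      grind
  · intro x hx
    obtain ⟨ha, ha'⟩ := mem_product.1 (mem_product.1 (mem_filter.1 hx).1).1
    exact sub_mem_sub ha ha'

/-- The third moment energy `E₃(A) = ∑ₛ |A ∩ (A + s)| ^ 3`; it controls the additive energies
between `A` and its intersections with its own translates. -/
def thirdEnergy (A : Finset G) : ℕ := ∑ s ∈ A - A, #(A ∩ (s +ᵥ A)) ^ 3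

lemma sum_addEnergy_inter_vadd_eq_thirdEnergy (A : Finset G) :
    ∑ s ∈ A - A, E[A, A ∩ (s +ᵥ A)] = thirdEnergy A := by
  simp_rw [addEnergy_eq_sum_card_mul_card]
  rw [sum_comm]
  refine sum_congr rfl fun x _ => ?_
  have hsub : A ∩ (x +ᵥ A) - A ∩ (x +ᵥ A) ⊆ A - A :=
    sub_subset_sub inter_subset_left inter_subset_left
  simp_rw [inter_vadd_inter_vadd_comm A _ x, ← mul_sum]
  rw [sum_card_inter_vadd hsub, pow_three]

lemma sq_card_mul_card_inter_vadd_le (A : Finset G) (s : G) :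
    (#A * #(A ∩ (s +ᵥ A))) ^ 2 ≤ #((A - A) ∩ (s +ᵥ (A - A))) * E[A, A ∩ (s +ᵥ A)] := by
  have hsub : A ∩ (s +ᵥ A) - A ⊆ (A - A) ∩ (s +ᵥ (A - A)) := by
    refine subset_inter (sub_subset_sub_right inter_subset_left) ?_
    rw [sub_eq_add_neg A, ← vadd_add_assoc, ← sub_eq_add_neg]
    exact sub_subset_sub_right inter_subset_right
  calc (#A * #(A ∩ (s +ᵥ A))) ^ 2 = #(A ∩ (s +ᵥ A)) ^ 2 * #(-A) ^ 2 := by rw [card_neg]; ring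
    _ ≤ #(A ∩ (s +ᵥ A) - A) * E[A ∩ (s +ᵥ A), -A] := by
      rw [sub_eq_add_neg]
      exact le_card_add_mul_addEnergy _ _
    _ ≤ #((A - A) ∩ (s +ᵥ (A - A))) * E[A, A ∩ (s +ᵥ A)] := by
      rw [addEnergy_neg_right, addEnergy_comm]
      gcongr

lemma card_pow_eight_le (A : Finset G) : #A ^ 8 ≤ #(A - A) * thirdEnergy A * E[A, A - A] := by
  rcases A.eq_empty_or_nonempty with rfl | hA
  · simp
  have hpoint : ∀ s, (#A * #(A ∩ (s +ᵥ A))) ^ 3 ≤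
      #A * (#(A ∩ (s +ᵥ A)) * #((A - A) ∩ (s +ᵥ (A - A)))) * E[A, A ∩ (s +ᵥ A)] := fun s =>
    calc (#A * #(A ∩ (s +ᵥ A))) ^ 3
        = #A * #(A ∩ (s +ᵥ A)) * (#A * #(A ∩ (s +ᵥ A))) ^ 2 := by ring
      _ ≤ #A * #(A ∩ (s +ᵥ A)) * (#((A - A) ∩ (s +ᵥ (A - A))) * E[A, A ∩ (s +ᵥ A)]) :=
        Nat.mul_le_mul_left _ (sq_card_mul_card_inter_vadd_le A s)
      _ = _ := by ring
  have holder := sum_pow_three_le_sum_mul_sum_mul_sum (R := ℤ) (A - A)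
    (x := fun s => ((#A * #(A ∩ (s +ᵥ A)) : ℕ) : ℤ)) (a := fun _ => (#A : ℤ))
    (b := fun s => ((#(A ∩ (s +ᵥ A)) * #((A - A) ∩ (s +ᵥ (A - A))) : ℕ) : ℤ))
    (c := fun s => (E[A, A ∩ (s +ᵥ A)] : ℤ)) (fun _ _ => Int.natCast_nonneg _)
    (fun _ _ => Int.natCast_nonneg _) (fun _ _ => Int.natCast_nonneg _)
    (fun _ _ => Int.natCast_nonneg _) fun s _ => mod_cast hpoint s
  norm_cast at holder
  rw [← mul_sum, sum_card_inter_vadd Subset.rfl, sum_const, smul_eq_mul,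
    ← addEnergy_eq_sum_card_mul_card, sum_addEnergy_inter_vadd_eq_thirdEnergy] at holder
  refine le_of_mul_le_mul_left (?_ : #A * #A ^ 8 ≤ #A * _) hA.card_pos
  calc #A * #A ^ 8 = (#A * (#A * #A)) ^ 3 := by ring
    _ ≤ _ := holder
    _ = _ := by ring

end Energy

section FwdDiff

/-- Injectivity of every forward difference `a ↦ f (a + d) - f a`, `d > 0`, where both `a` and
`a + d` range over `s`; equivalently, two horizontally displaced translates of the graph of `f`
over `s` share at most one point. Convexity enters the incidence bound in this form. -/
def FwdDiffInjOn {G H : Type*} [AddCommGroup G] [Preorder G] [AddCommGroup H] (f : G → H)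
    (s : Set G) : Prop :=
  ∀ ⦃d : G⦄, 0 < d → Set.InjOn (fwdDiff d f) {a ∈ s | a + d ∈ s}

section Group

variable {G H : Type*} [AddCommGroup G] [Preorder G] [AddCommGroup H] {f : G → H} {s t : Set G}

lemma FwdDiffInjOn.mono (hf : FwdDiffInjOn f t) (hst : s ⊆ t) : FwdDiffInjOn f s := fun _ hd =>
  (hf hd).mono (Set.inter_subset_inter hst (Set.preimage_mono hst))

lemma FwdDiffInjOn.neg (hf : FwdDiffInjOn f s) : FwdDiffInjOn (-f) s := by
  intro d hd a ha b hb h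
  refine hf hd ha hb (neg_injective ?_)
  simpa only [fwdDiff, Pi.neg_apply, neg_sub', sub_neg_eq_add] using h

end Group

variable {𝕜 β : Type*} [Field 𝕜] [LinearOrder 𝕜] [IsStrictOrderedRing 𝕜] [AddCommGroup β]
  [Module 𝕜 β] {s : Set 𝕜} {f : 𝕜 → β}

lemma strictMonoOn_fwdDiff_of_strictConvexOn [PartialOrder β] [IsOrderedAddMonoid β]
    (hf : StrictConvexOn 𝕜 s f) {d : 𝕜} (hd : 0 < d) :
    StrictMonoOn (fwdDiff d f) {a ∈ s | a + d ∈ s} := by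
  rintro a ⟨ha, -⟩ b ⟨-, hbd⟩ hab
  have hlen : 0 < b - a + d := by linarith
  have : 0 < b - a := sub_pos.2 hab
  have hne : a ≠ b + d := by linarith
  set θ := (b - a) / (b - a + d) with hθ
  have hθ0 : 0 < θ := by positivity
  have hθ1 : 0 < 1 - θ := by
    rw [sub_pos, hθ, div_lt_one hlen]
    linarith
  have hθmul : θ * (b - a + d) = b - a := div_mul_cancel₀ _ hlen.ne'
  have hleft : f (a + d) < θ • f a + (1 - θ) • f (b + d) := by
    convert hf.2 ha hbd hne hθ0 hθ1 (by ring) using 2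
    simp only [smul_eq_mul]
    linear_combination hθmul
  have hright : f b < (1 - θ) • f a + θ • f (b + d) := by
    convert hf.2 ha hbd hne hθ1 hθ0 (by ring) using 2
    simp only [smul_eq_mul]
    linear_combination -hθmul
  have hsum : f (a + d) + f b < f a + f (b + d) := by
    convert add_lt_add hleft hright using 1
    module
  simp only [fwdDiff]
  rw [sub_lt_sub_iff]
  rwa [add_comm (f (b + d))]

lemma fwdDiffInjOn_of_strictConvexOn [PartialOrder β] [IsOrderedAddMonoid β]
    (hf : StrictConvexOn 𝕜 s f) : FwdDiffInjOn f s := fun _ hd =>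
  (strictMonoOn_fwdDiff_of_strictConvexOn hf hd).injOn

lemma exists_subset_strictMonoOn_or_strictAntiOn [LinearOrder β] [IsOrderedAddMonoid β]
    [PosSMulStrictMono 𝕜 β] (hf : StrictConvexOn 𝕜 s f) {A : Finset 𝕜} (hA : ↑A ⊆ s) :
    ∃ B ⊆ A, #A ≤ 2 * #B + 1 ∧ (StrictMonoOn f B ∨ StrictAntiOn f B) := by
  rcases A.eq_empty_or_nonempty with rfl | hne
  · exact ⟨∅, by simp [StrictMonoOn]⟩
  obtain ⟨m, hm, hmin⟩ := exists_min_image A f hne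
  have hmono : StrictMonoOn f ({a ∈ A | m < a} : Finset 𝕜) := by
    intro a ha b hb hab
    simp only [coe_filter, Set.mem_ofPred_eq] at ha hb
    have h := hf.lt_on_openSegment (hA hm) (hA hb.1) (ha.2.trans hab).ne
      (by rw [openSegment_eq_Ioo (ha.2.trans hab)]; exact ⟨ha.2, hab⟩)
    exact (lt_max_iff.1 h).resolve_left (hmin a ha.1).not_gt
  have hanti : StrictAntiOn f ({a ∈ A | a < m} : Finset 𝕜) := by
    intro a ha b hb hab
    simp only [coe_filter, Set.mem_ofPred_eq] at ha hb
    have h := hf.lt_on_openSegment (hA ha.1) (hA hm) (hab.trans hb.2).ne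
      (by rw [openSegment_eq_Ioo (hab.trans hb.2)]; exact ⟨hab, hb.2⟩)
    exact (lt_max_iff.1 h).resolve_right (hmin b hb.1).not_gt
  have hcard : #A ≤ #{a ∈ A | m < a} + #{a ∈ A | a < m} + 1 := by
    have hcover : A ⊆ {a ∈ A | m < a} ∪ {a ∈ A | a < m} ∪ {m} := fun a ha => by
      rcases lt_trichotomy a m with h | h | h <;> simp [ha, h]
    exact (card_le_card hcover).trans ((card_union_le _ _).trans
      (Nat.add_le_add (card_union_le _ _) (card_singleton m).le))
  rcases le_total #{a ∈ A | m < a} #{a ∈ A | a < m} with h | h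
  · exact ⟨_, filter_subset _ _, by lia, .inr hanti⟩
  · exact ⟨_, filter_subset _ _, by lia, .inl hmono⟩

end FwdDiff

section Blocks

variable {α : Type*} [LinearOrder α]

/-- The index of the block containing `x` when the elements of `X` are cut, in increasing order,
into consecutive blocks of `k` elements. -/
def blockIndex (X : Finset α) (k : ℕ) (x : α) : ℕ := #{y ∈ X | y < x} / k

/-- The pairs of elements of `X` lying in a common block of size `k`. They bound the number of
pairs of points that the curves of an incidence problem can have in common grid cells. -/
def blockPairs (X : Finset α) (k : ℕ) : Finset (α × α) :=
  {p ∈ X ×ˢ X | blockIndex X k p.1 = blockIndex X k p.2}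

lemma blockIndex_mono (X : Finset α) (k : ℕ) : Monotone (blockIndex X k) := fun _ _ hxy =>
  Nat.div_le_div_right (card_le_card (monotone_filter_right _ fun _ _ h => h.trans_le hxy))

lemma mul_blockIndex_lt {X : Finset α} {x : α} (hx : x ∈ X) {n k τ : ℕ} (hn : 0 < n)
    (h : n * #X ≤ k * τ) : n * blockIndex X k x < τ := by
  have hlt : blockIndex X k x * k < #X := (Nat.div_mul_le_self _ _).trans_lt
    (card_lt_card (filter_ssubset.2 ⟨x, hx, lt_irrefl x⟩))
  refine lt_of_mul_lt_mul_left (?_ : k * (n * blockIndex X k x) < k * τ) (Nat.zero_le k)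
  calc k * (n * blockIndex X k x) = n * (blockIndex X k x * k) := by ring
    _ < n * #X := by gcongr
    _ ≤ k * τ := h

lemma strictMonoOn_card_filter_lt (X : Finset α) : StrictMonoOn (fun x => #{y ∈ X | y < x}) X :=
  fun x hx _ _ hxy => card_lt_card <| (ssubset_iff_of_subset
    (monotone_filter_right _ fun _ _ h => h.trans hxy)).2 ⟨x, mem_filter.2 ⟨hx, hxy⟩, by simp⟩

lemma card_blockPairs_le (X : Finset α) {k : ℕ} (hk : 0 < k) : #(blockPairs X k) ≤ #X * k := by
  rw [← card_range k, ← card_product, card_range]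
  refine card_le_card_of_injOn (fun p => (p.1, #{y ∈ X | y < p.2} % k)) ?_ ?_
  · intro p hp
    simp only [blockPairs, mem_coe, mem_filter, mem_product] at hp
    simpa using ⟨hp.1.1, Nat.mod_lt _ hk⟩
  · intro p hp q hq h
    simp only [blockPairs, mem_coe, mem_filter, mem_product] at hp hq
    obtain ⟨hfst, hmod⟩ := Prod.mk.inj h
    refine Prod.ext hfst ((strictMonoOn_card_filter_lt X).injOn hp.1.2 hq.1.2 ?_)
    have hdiv : blockIndex X k p.2 = blockIndex X k q.2 := by rw [← hp.2, ← hq.2, hfst]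
    unfold blockIndex at hdiv
    rw [← Nat.div_add_mod #{y ∈ X | y < p.2} k, hdiv, hmod, Nat.div_add_mod]

lemma card_le_card_add_card_collisions {β : Type*} [DecidableEq β] {Y : Finset α} {V : Finset β}
    {φ : α → β} (hφ : Set.MapsTo φ Y V) :
    #Y ≤ #V + #{p ∈ Y ×ˢ Y | p.1 < p.2 ∧ φ p.1 = φ p.2} := by
  rw [← card_filter_add_card_filter_not (fun y => ∀ x ∈ Y, x < y → φ x ≠ φ y)]
  refine add_le_add ?firsts ?others
  case firsts =>
    refine card_le_card_of_injOn φ (fun y hy => hφ (mem_filter.1 hy).1) fun y hy z hz h => ?_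
    obtain ⟨hy, hy'⟩ := mem_filter.1 hy
    obtain ⟨hz, hz'⟩ := mem_filter.1 hz
    exact le_antisymm (not_lt.1 fun hlt => hy' z hz hlt h.symm)
      (not_lt.1 fun hlt => hz' y hy hlt h)
  case others =>
    refine card_le_card_of_surjOn Prod.snd fun y hy => ?_
    obtain ⟨hy, hy'⟩ := mem_filter.1 hy
    push Not at hy'
    obtain ⟨x, hx, hxy, h⟩ := hy'
    exact ⟨(x, y), by simp [hx, hy, hxy, h], rfl⟩

lemma card_le_add_card_collisions_of_monotoneOn {Y : Finset α} {g h : α → ℕ} {m n : ℕ}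
    (hg : MonotoneOn g Y) (hh : MonotoneOn h Y) (hgm : ∀ y ∈ Y, g y ≤ m) (hhn : ∀ y ∈ Y, h y ≤ n) :
    #Y ≤ m + n + 1 + #{p ∈ Y ×ˢ Y | p.1 < p.2 ∧ g p.1 = g p.2 ∧ h p.1 = h p.2} := by
  have hmaps : Set.MapsTo (fun y => g y + h y) Y (range (m + n + 1)) := fun y hy => by
    simpa [Nat.lt_succ_iff] using add_le_add (hgm y hy) (hhn y hy)
  refine (card_le_card_add_card_collisions hmaps).trans ?_
  rw [card_range]
  gcongr 1
  refine card_le_card fun p hp => ?_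
  simp only [mem_filter, mem_product] at hp ⊢
  obtain ⟨⟨hp₁, hp₂⟩, hlt, hsum⟩ := hp
  exact ⟨⟨hp₁, hp₂⟩, hlt, (add_eq_add_iff_eq_and_eq (hg hp₁ hp₂ hlt.le) (hh hp₁ hp₂ hlt.le)).1 hsum⟩

end Blocks

lemma card_le_card_image_add {α β : Type*} [Add β] [IsRightCancelAdd β] [DecidableEq β]
    {f : α → β} {A : Finset α} {C : Finset β} (hf : Set.InjOn f A) (hC : C.Nonempty) :
    #A ≤ #(A.image f + C) :=
  (card_image_of_injOn hf).ge.trans (card_le_card_add_right hC)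

section Incidence

variable {G H : Type*} [AddCommGroup G] [LinearOrder G] [IsOrderedAddMonoid G] [AddCommGroup H]
  {f : G → H}

lemma sum_card_translate_pairs_le [DecidableEq H] {A : Finset G} (hf : FwdDiffInjOn f A)
    (P : Finset (G × G)) (Q : Finset (H × H)) (T : Finset G) (C : Finset H) :
    ∑ q ∈ T ×ˢ C, #{p ∈ A ×ˢ A | p.1 < p.2 ∧ (p.1 - q.1, p.2 - q.1) ∈ P ∧
      (f p.1 + q.2, f p.2 + q.2) ∈ Q} ≤ #P * #Q := by
  rw [← card_sigma, ← card_product]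
  refine card_le_card_of_injOn (fun x => ((x.2.1 - x.1.1, x.2.2 - x.1.1),
    (f x.2.1 + x.1.2, f x.2.2 + x.1.2))) ?_ ?_
  · intro x hx
    exact mem_product.2 (mem_filter.1 (mem_sigma.1 hx).2).2.2
  · rintro ⟨⟨s, c⟩, a, a'⟩ hx ⟨⟨t, d⟩, b, b'⟩ hy h
    obtain ⟨⟨has, has'⟩, hac, hac'⟩ := by simpa only [Prod.mk.injEq] using h
    simp only [coe_sigma, Set.mem_sigma_iff, mem_coe, mem_filter, mem_product] at hx hy
    obtain ⟨-, ⟨ha, ha'⟩, hlt, -⟩ := hx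
    obtain ⟨-, ⟨hb, hb'⟩, -⟩ := hy
    have hstep : a' - a = b' - b := by
      rw [← sub_sub_sub_cancel_right a' a s, has, has', sub_sub_sub_cancel_right]
    have hstep_f : f a' - f a = f b' - f b := by
      rw [← add_sub_add_right_eq_sub (f a') (f a) c, hac, hac', add_sub_add_right_eq_sub]
    have ha'_eq : a + (a' - a) = a' := add_sub_cancel a a'
    have hb'_eq : b + (a' - a) = b' := by rw [hstep, add_sub_cancel]
    obtain rfl : a = b := hf (sub_pos.2 hlt) ⟨ha, by rwa [ha'_eq]⟩ ⟨hb, by rwa [hb'_eq]⟩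
      (by rwa [fwdDiff, fwdDiff, ha'_eq, hb'_eq])
    obtain rfl : a' = b' := sub_left_injective hstep
    obtain rfl : s = t := sub_right_injective has
    obtain rfl : c = d := add_left_cancel hac
    rfl

variable [LinearOrder H] [IsOrderedAddMonoid H] {A B T : Finset G} {C S : Finset H}

lemma half_le_card_pairs_mem_blockPairs (hf : StrictMonoOn f A) {s : G} {c : H}
    (hS : ∀ a ∈ A, f a + c ∈ S) {τ k l : ℕ} (hτ : τ ≤ #(A ∩ (s +ᵥ B)))
    (hk : 4 * #B ≤ k * τ) (hl : 4 * #S ≤ l * τ) :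
    τ / 2 ≤ #{p ∈ A ×ˢ A | p.1 < p.2 ∧ (p.1 - s, p.2 - s) ∈ blockPairs B k ∧
      (f p.1 + c, f p.2 + c) ∈ blockPairs S l} := by
  set Y := A ∩ (s +ᵥ B)
  have mem_left : ∀ a ∈ Y, a ∈ A := fun a ha => (mem_inter.1 ha).1
  have sub_mem : ∀ a ∈ Y, a - s ∈ B := fun a ha => by
    simpa [sub_eq_neg_add, ← neg_vadd_mem_iff] using (mem_inter.1 ha).2
  have add_mem : ∀ a ∈ Y, f a + c ∈ S := fun a ha => hS a (mem_left a ha)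
  have hcollisions := card_le_add_card_collisions_of_monotoneOn (Y := Y) (m := (τ - 1) / 4)
    (n := (τ - 1) / 4) (g := fun a => blockIndex B k (a - s))
    (h := fun a => blockIndex S l (f a + c))
    (fun a _ b _ hab => blockIndex_mono B k (sub_le_sub_right hab s))
    (fun a ha b hb hab => blockIndex_mono S l (add_le_add_left
      (hf.monotoneOn (mem_left a ha) (mem_left b hb) hab) c))
    (fun a ha => by have := mul_blockIndex_lt (sub_mem a ha) four_pos hk; lia)
    (fun a ha => by have := mul_blockIndex_lt (add_mem a ha) four_pos hl; lia)
  have hpairs : {p ∈ Y ×ˢ Y | p.1 < p.2 ∧ blockIndex B k (p.1 - s) = blockIndex B k (p.2 - s) ∧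
      blockIndex S l (f p.1 + c) = blockIndex S l (f p.2 + c)} ⊆
      {p ∈ A ×ˢ A | p.1 < p.2 ∧ (p.1 - s, p.2 - s) ∈ blockPairs B k ∧
        (f p.1 + c, f p.2 + c) ∈ blockPairs S l} := by
    intro p hp
    simp only [blockPairs, mem_filter, mem_product] at hp ⊢
    obtain ⟨⟨h₁, h₂⟩, hlt, hB, hS⟩ := hp
    exact ⟨⟨mem_left _ h₁, mem_left _ h₂⟩, hlt, ⟨⟨sub_mem _ h₁, sub_mem _ h₂⟩, hB⟩,
      ⟨add_mem _ h₁, add_mem _ h₂⟩, hS⟩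
  have := card_le_card hpairs
  lia

lemma card_mul_card_mul_half_le (hf : FwdDiffInjOn f A) (hmono : StrictMonoOn f A)
    (hS : A.image f + C ⊆ S) {τ k l : ℕ} (hT : ∀ s ∈ T, τ ≤ #(A ∩ (s +ᵥ B)))
    (hk₀ : 0 < k) (hl₀ : 0 < l) (hk : 4 * #B ≤ k * τ) (hl : 4 * #S ≤ l * τ) :
    #T * #C * (τ / 2) ≤ (#B * k) * (#S * l) :=
  calc #T * #C * (τ / 2) = #(T ×ˢ C) • (τ / 2) := by rw [card_product, smul_eq_mul]
    _ ≤ ∑ q ∈ T ×ˢ C, #{p ∈ A ×ˢ A | p.1 < p.2 ∧ (p.1 - q.1, p.2 - q.1) ∈ blockPairs B k ∧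
          (f p.1 + q.2, f p.2 + q.2) ∈ blockPairs S l} :=
      card_nsmul_le_sum _ _ _ fun q hq => half_le_card_pairs_mem_blockPairs hmono
        (fun a ha => hS (add_mem_add (mem_image_of_mem f ha) (mem_product.1 hq).2))
        (hT _ (mem_product.1 hq).1) hk hl
    _ ≤ #(blockPairs B k) * #(blockPairs S l) := sum_card_translate_pairs_le hf _ _ _ _
    _ ≤ (#B * k) * (#S * l) :=
      Nat.mul_le_mul (card_blockPairs_le B hk₀) (card_blockPairs_le S hl₀)

lemma exists_mul_mem_Icc_four_five {τ N : ℕ} (hτ : 0 < τ) (hτN : τ ≤ N) :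
    ∃ k, 0 < k ∧ 4 * N ≤ k * τ ∧ k * τ ≤ 5 * N := by
  have hfloor := Nat.div_mul_le_self (4 * N) τ
  have hceil := Nat.lt_div_mul_add (a := 4 * N) hτ
  refine ⟨4 * N / τ + 1, Nat.succ_pos _, ?_, ?_⟩ <;> rw [add_one_mul] <;> lia

lemma card_rich_translates_mul_cube_le (hf : FwdDiffInjOn f A) (hmono : StrictMonoOn f A) {τ : ℕ}
    (hT : ∀ s ∈ T, τ ≤ #(A ∩ (s +ᵥ B))) :
    #T * #C * τ ^ 3 ≤ 75 * #(A.image f + C) ^ 2 * #B ^ 2 := by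
  rcases T.eq_empty_or_nonempty with rfl | ⟨t, ht⟩
  · simp
  rcases C.eq_empty_or_nonempty with rfl | hC
  · simp
  rcases τ.eq_zero_or_pos with rfl | hτ
  · simp
  have hτB : τ ≤ #B := by simpa using (hT t ht).trans (card_le_card inter_subset_right)
  have hτA : τ ≤ #A := (hT t ht).trans (card_le_card inter_subset_left)
  have hAS : #A ≤ #(A.image f + C) := card_le_card_image_add hmono.injOn hC
  set S := A.image f + C
  rcases (Nat.succ_le_of_lt hτ).eq_or_lt with rfl | hτ₂
  · have hTAB : #T ≤ #A * #B := (card_le_card fun s hs =>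
      inter_vadd_nonempty_iff.1 (card_pos.1 (hT s hs))).trans card_sub_le
    have hCS : #C ≤ #S := card_le_card_add_left ((card_pos.1 (hτ.trans_le hτA)).image f)
    calc #T * #C * 1 ^ 3 ≤ #S * #B * #S * 1 ^ 3 := by gcongr; exact hTAB.trans (by gcongr)
      _ ≤ 75 * #S ^ 2 * #B ^ 2 := by nlinarith [Nat.zero_le (#S ^ 2 * #B)]
  obtain ⟨k, hk₀, hBk, hkB⟩ := exists_mul_mem_Icc_four_five hτ hτB
  obtain ⟨l, hl₀, hSl, hlS⟩ := exists_mul_mem_Icc_four_five hτ (hτA.trans hAS)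
  have hτ_half : τ ≤ 3 * (τ / 2) := by lia
  calc #T * #C * τ ^ 3 = #T * #C * τ * τ ^ 2 := by ring
    _ ≤ #T * #C * (3 * (τ / 2)) * τ ^ 2 := by gcongr
    _ = 3 * (#T * #C * (τ / 2)) * τ ^ 2 := by ring
    _ ≤ 3 * ((#B * k) * (#S * l)) * τ ^ 2 := by
      gcongr 3 * ?_ * τ ^ 2
      exact card_mul_card_mul_half_le hf hmono Subset.rfl hT hk₀ hl₀ hBk hSl
    _ = 3 * #B * #S * (k * τ) * (l * τ) := by ring
    _ ≤ 3 * #B * #S * (5 * #B) * (5 * #S) := by gcongr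
    _ = 75 * #S ^ 2 * #B ^ 2 := by ring

end Incidence

section Moments

lemma natCast_pow_three_le_sum_Icc (m : ℕ) : (m : ℝ) ^ 3 ≤ ∑ τ ∈ Icc 1 m, 3 * (τ : ℝ) ^ 2 := by
  induction m with
  | zero => simp
  | succ m ih =>
    rw [sum_Icc_succ_top (by lia)]
    push_cast
    nlinarith [(Nat.cast_nonneg m : (0 : ℝ) ≤ m)]

lemma natCast_sq_le_mul_add_sum_Ioc (d m : ℕ) :
    (m : ℝ) ^ 2 ≤ d * m + ∑ τ ∈ Ioc d m, 2 * (τ : ℝ) := by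
  rcases le_total m d with h | h
  · rw [Ioc_eq_empty_of_le h, sum_empty, add_zero, sq]
    gcongr
  · induction m, h using Nat.le_induction with
    | base => simp [sq]
    | succ m hdm ih =>
      have : (d : ℝ) ≤ m := by exact_mod_cast hdm
      rw [sum_Ioc_succ_top hdm]
      push_cast
      nlinarith [(Nat.cast_nonneg d : (0 : ℝ) ≤ d)]

variable {ι : Type*} {T : Finset ι} {r : ι → ℕ} {M : ℝ}

lemma sum_sum_filter_le_sum_mul_div (hr : ∀ τ : ℕ, (#{i ∈ T | τ ≤ r i} : ℝ) * τ ^ 3 ≤ M)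
    {I : Finset ℕ} (hI : ∀ τ ∈ I, 0 < τ) {w : ℕ → ℝ} (hw : ∀ τ ∈ I, 0 ≤ w τ) :
    ∑ i ∈ T, ∑ τ ∈ I with τ ≤ r i, w τ ≤ ∑ τ ∈ I, w τ * (M / τ ^ 3) := by
  simp only [sum_filter]
  rw [sum_comm]
  refine sum_le_sum fun τ hτ => ?_
  have hpos : (0 : ℝ) < τ := by exact_mod_cast hI τ hτ
  rw [← sum_filter, sum_const, nsmul_eq_mul, mul_comm]
  exact mul_le_mul_of_nonneg_left ((le_div_iff₀ (by positivity)).2 (hr τ)) (hw τ hτ)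

lemma sum_pow_three_le_mul_one_add_log (hr : ∀ τ : ℕ, (#{i ∈ T | τ ≤ r i} : ℝ) * τ ^ 3 ≤ M) {n : ℕ}
    (hn : ∀ i ∈ T, r i ≤ n) : ∑ i ∈ T, (r i : ℝ) ^ 3 ≤ 3 * M * (1 + Real.log n) := by
  have hM : 0 ≤ M := by simpa using hr 0
  have hlayers : ∀ i ∈ T, {τ ∈ Icc 1 n | τ ≤ r i} = Icc 1 (r i) := fun i hi => by
    have := hn i hi
    ext τ
    simp only [mem_Icc, mem_filter]
    lia
  calc ∑ i ∈ T, (r i : ℝ) ^ 3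
      ≤ ∑ i ∈ T, ∑ τ ∈ Icc 1 n with τ ≤ r i, 3 * (τ : ℝ) ^ 2 := sum_le_sum fun i hi => by
        rw [hlayers i hi]
        exact natCast_pow_three_le_sum_Icc (r i)
    _ ≤ ∑ τ ∈ Icc 1 n, 3 * (τ : ℝ) ^ 2 * (M / τ ^ 3) :=
        sum_sum_filter_le_sum_mul_div hr (fun τ hτ => (mem_Icc.1 hτ).1) fun _ _ => by positivity
    _ = 3 * M * (harmonic n : ℝ) := by
        rw [harmonic_eq_sum_Icc]
        push_cast
        rw [mul_sum]
        refine sum_congr rfl fun τ hτ => ?_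
        have : (0 : ℝ) < τ := by exact_mod_cast (mem_Icc.1 hτ).1
        field_simp
    _ ≤ 3 * M * (1 + Real.log n) := by gcongr; exact harmonic_le_one_add_log n

lemma sum_sq_le_mul_sum_add_div (hr : ∀ τ : ℕ, (#{i ∈ T | τ ≤ r i} : ℝ) * τ ^ 3 ≤ M) {d : ℕ}
    (hd : 0 < d) : ∑ i ∈ T, (r i : ℝ) ^ 2 ≤ d * ∑ i ∈ T, (r i : ℝ) + 2 * M / d := by
  have hM : 0 ≤ M := by simpa using hr 0
  set N := max d (T.sup r)
  have hlayers : ∀ i ∈ T, {τ ∈ Ioc d N | τ ≤ r i} = Ioc d (r i) := fun i hi => by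
    have : r i ≤ N := (le_sup hi).trans (le_max_right _ _)
    ext τ
    simp only [mem_Ioc, mem_filter]
    lia
  calc ∑ i ∈ T, (r i : ℝ) ^ 2
      ≤ ∑ i ∈ T, (d * (r i : ℝ) + ∑ τ ∈ Ioc d N with τ ≤ r i, 2 * (τ : ℝ)) :=
        sum_le_sum fun i hi => by
          rw [hlayers i hi]
          exact natCast_sq_le_mul_add_sum_Ioc d (r i)
    _ = d * ∑ i ∈ T, (r i : ℝ) + ∑ i ∈ T, ∑ τ ∈ Ioc d N with τ ≤ r i, 2 * (τ : ℝ) := by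
        rw [sum_add_distrib, mul_sum]
    _ ≤ d * ∑ i ∈ T, (r i : ℝ) + ∑ τ ∈ Ioc d N, 2 * (τ : ℝ) * (M / τ ^ 3) := by
        gcongr
        exact sum_sum_filter_le_sum_mul_div hr (fun τ hτ => hd.trans (mem_Ioc.1 hτ).1)
          fun _ _ => by positivity
    _ = d * ∑ i ∈ T, (r i : ℝ) + 2 * M * ∑ τ ∈ Ioc d N, ((τ : ℝ) ^ 2)⁻¹ := by
        congr 1
        rw [mul_sum]
        refine sum_congr rfl fun τ hτ => ?_
        have : (0 : ℝ) < τ := by exact_mod_cast hd.trans (mem_Ioc.1 hτ).1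
        field_simp
    _ ≤ d * ∑ i ∈ T, (r i : ℝ) + 2 * M * (d : ℝ)⁻¹ := by
        gcongr
        refine (sum_Ioc_inv_sq_le_sub hd.ne' (le_max_left _ _)).trans ?_
        simp
    _ = d * ∑ i ∈ T, (r i : ℝ) + 2 * M / d := by rw [div_eq_mul_inv]

lemma sq_sum_sq_le_mul_sum (hr : ∀ τ : ℕ, (#{i ∈ T | τ ≤ r i} : ℝ) * τ ^ 3 ≤ M)
    (hpos : 0 < ∑ i ∈ T, (r i : ℝ)) (hle : ∑ i ∈ T, (r i : ℝ) ≤ M) :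
    (∑ i ∈ T, (r i : ℝ) ^ 2) ^ 2 ≤ 16 * (M * ∑ i ∈ T, (r i : ℝ)) := by
  set R := ∑ i ∈ T, (r i : ℝ)
  have hM : 0 < M := hpos.trans_le hle
  -- `d = ⌈x⌉₊` balances the two terms of `sum_sq_le_mul_sum_add_div`.
  set x := √(M / R) with hx
  have hx_one : 1 ≤ x := Real.one_le_sqrt.2 ((one_le_div hpos).2 hle)
  have hx_sq : x ^ 2 * R = M := by
    rw [hx, Real.sq_sqrt (by positivity), div_mul_cancel₀ _ hpos.ne']
  have hceil : (⌈x⌉₊ : ℝ) ≤ 2 * x := by linarith [Nat.ceil_lt_add_one (zero_le_one.trans hx_one)]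
  have hsq : ∑ i ∈ T, (r i : ℝ) ^ 2 ≤ 4 * (x * R) :=
    calc ∑ i ∈ T, (r i : ℝ) ^ 2 ≤ ⌈x⌉₊ * R + 2 * M / ⌈x⌉₊ :=
          sum_sq_le_mul_sum_add_div hr (Nat.ceil_pos.2 (by positivity))
      _ ≤ 2 * x * R + 2 * M / x := by gcongr; exact Nat.le_ceil x
      _ = 4 * (x * R) := by
        rw [← hx_sq]
        field_simp
        ring
  calc (∑ i ∈ T, (r i : ℝ) ^ 2) ^ 2 ≤ (4 * (x * R)) ^ 2 := by gcongr
    _ = 16 * (x ^ 2 * R * R) := by ring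
    _ = 16 * (M * R) := by rw [hx_sq]

end Moments

section ConvexSumset

variable {G H : Type*} [AddCommGroup G] [LinearOrder G] [IsOrderedAddMonoid G]
  [AddCommGroup H] [LinearOrder H] [IsOrderedAddMonoid H] {f : G → H} {A B : Finset G}
  {C : Finset H}

lemma card_filter_rich_translates_mul_cube_le (hf : FwdDiffInjOn f A) (hmono : StrictMonoOn f A)
    (hC : C.Nonempty) (B T : Finset G) (τ : ℕ) :
    (#{t ∈ T | τ ≤ #(A ∩ (t +ᵥ B))} : ℝ) * τ ^ 3 ≤
      75 * #(A.image f + C) ^ 2 * #B ^ 2 / #C := by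
  rw [le_div_iff₀ (by exact_mod_cast hC.card_pos), mul_right_comm]
  exact_mod_cast card_rich_translates_mul_cube_le hf hmono fun t ht => (mem_filter.1 ht).2

lemma thirdEnergy_le (hf : FwdDiffInjOn f A) (hmono : StrictMonoOn f A) (hC : C.Nonempty) :
    (thirdEnergy A : ℝ) ≤
      225 * #(A.image f + C) ^ 2 * #A ^ 2 / #C * (1 + Real.log #A) := by
  have h := sum_pow_three_le_mul_one_add_log
    (card_filter_rich_translates_mul_cube_le hf hmono hC A (A - A))
    fun _ _ => card_le_card inter_subset_left
  rw [thirdEnergy]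
  push_cast
  exact h.trans_eq (by ring)

lemma sq_addEnergy_le (hf : FwdDiffInjOn f A) (hmono : StrictMonoOn f A) (hA : A.Nonempty)
    (hB : B.Nonempty) (hC : C.Nonempty) :
    (E[A, B] : ℝ) ^ 2 ≤
      16 * (75 * #(A.image f + C) ^ 2 * #B ^ 2 / #C * (#A * #B)) := by
  have hsum : ∑ t ∈ A - B, (#(A ∩ (t +ᵥ B)) : ℝ) = #A * #B := by
    exact_mod_cast sum_card_inter_vadd Subset.rfl
  have : (0 : ℝ) < #A := by exact_mod_cast hA.card_pos
  have hBone : (1 : ℝ) ≤ #B := by exact_mod_cast hB.card_pos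
  have hAS : (#A : ℝ) ≤ #(A.image f + C) := by
    exact_mod_cast card_le_card_image_add hmono.injOn hC
  have hCS : (#C : ℝ) ≤ #(A.image f + C) := by
    exact_mod_cast card_le_card_add_left (hA.image f)
  rw [addEnergy_eq_sum_sq_card_inter_vadd, ← hsum]
  push_cast
  refine sq_sum_sq_le_mul_sum (card_filter_rich_translates_mul_cube_le hf hmono hC B (A - B))
    (hsum ▸ by positivity) ?_
  rw [hsum, le_div_iff₀ (by exact_mod_cast hC.card_pos)]
  calc (#A : ℝ) * #B * #C ≤ #(A.image f + C) * (#B * #B) * #(A.image f + C) := by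
        gcongr
        exact le_mul_of_one_le_left (by positivity) hBone
    _ ≤ 75 * #(A.image f + C) ^ 2 * #B ^ 2 := by nlinarith [sq_nonneg (#(A.image f + C) * #B : ℝ)]

lemma card_pow_mul_card_pow_le_of_strictMonoOn (hf : FwdDiffInjOn f A) (hmono : StrictMonoOn f A)
    (hA : A.Nonempty) (hC : C.Nonempty) :
    (#A : ℝ) ^ 11 * #C ^ 3 ≤
      2 ^ 26 * (#(A.image f + C) ^ 6 * #(A - A) ^ 5 * (1 + Real.log #A) ^ 2) := by
  have : (0 : ℝ) < #A := by exact_mod_cast hA.card_pos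
  have : (0 : ℝ) < #C := by exact_mod_cast hC.card_pos
  have henergy : (#A : ℝ) ^ 8 ≤ #(A - A) * thirdEnergy A * E[A, A - A] := by
    exact_mod_cast card_pow_eight_le A
  have hsq : (#A : ℝ) ^ 16 ≤ 225 ^ 2 * 1200 * (#(A.image f + C) ^ 6 * #(A - A) ^ 5 *
      (1 + Real.log #A) ^ 2) * #A ^ 5 / #C ^ 3 := by
    calc (#A : ℝ) ^ 16 = ((#A : ℝ) ^ 8) ^ 2 := by ring
      _ ≤ (#(A - A) * thirdEnergy A * E[A, A - A] : ℝ) ^ 2 := by gcongr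
      _ = (#(A - A) : ℝ) ^ 2 * thirdEnergy A ^ 2 * E[A, A - A] ^ 2 := by ring
      _ ≤ #(A - A) ^ 2 *
            (225 * #(A.image f + C) ^ 2 * #A ^ 2 / #C * (1 + Real.log #A)) ^ 2 *
          (16 * (75 * #(A.image f + C) ^ 2 * #(A - A) ^ 2 / #C * (#A * #(A - A)))) := by
        gcongr
        · exact thirdEnergy_le hf hmono hC
        · exact sq_addEnergy_le hf hmono hA (hA.sub hA) hC
      _ = _ := by
        field_simp
        ring
  rw [le_div_iff₀ (by positivity)] at hsq
  refine le_of_mul_le_mul_right ?_ (by positivity : (0 : ℝ) < #A ^ 5)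
  calc (#A : ℝ) ^ 11 * #C ^ 3 * #A ^ 5 = #A ^ 16 * #C ^ 3 := by ring
    _ ≤ 225 ^ 2 * 1200 * (#(A.image f + C) ^ 6 * #(A - A) ^ 5 * (1 + Real.log #A) ^ 2) * #A ^ 5 :=
      hsq
    _ ≤ 2 ^ 26 * (#(A.image f + C) ^ 6 * #(A - A) ^ 5 * (1 + Real.log #A) ^ 2) * #A ^ 5 := by
      gcongr
      norm_num

lemma card_pow_mul_card_pow_le (hf : FwdDiffInjOn f A)
    (hmono : StrictMonoOn f A ∨ StrictAntiOn f A) (hA : A.Nonempty) (hC : C.Nonempty) :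
    (#A : ℝ) ^ 11 * #C ^ 3 ≤
      2 ^ 26 * (#(A.image f + C) ^ 6 * #(A - A) ^ 5 * (1 + Real.log #A) ^ 2) := by
  rcases hmono with hmono | hanti
  · exact card_pow_mul_card_pow_le_of_strictMonoOn hf hmono hA hC
  · have himage : A.image (-f) + -C = -(A.image f + C) := by
      rw [neg_add, ← image_neg_eq_neg (A.image f), image_image]
      rfl
    simpa only [himage, card_neg] using
      card_pow_mul_card_pow_le_of_strictMonoOn hf.neg hanti.neg hA hC.neg

end ConvexSumset

lemma one_add_log_natCast_le {m n : ℕ} (hm : 0 < m) (hmn : m ≤ n) (hn : 2 ≤ n) :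
    1 + Real.log m ≤ 3 * Real.log n := by
  have hlog_mn : Real.log m ≤ Real.log n :=
    Real.log_le_log (by exact_mod_cast hm) (by exact_mod_cast hmn)
  have hlog_two : Real.log 2 ≤ Real.log n := Real.log_le_log two_pos (by exact_mod_cast hn)
  linarith [Real.log_two_gt_d9]

theorem stmt11_general {𝕜 β : Type*} [Field 𝕜] [LinearOrder 𝕜] [IsStrictOrderedRing 𝕜]
    [AddCommGroup β] [LinearOrder β] [IsOrderedAddMonoid β] [Module 𝕜 β] [PosSMulStrictMono 𝕜 β]
    {s : Set 𝕜} {f : 𝕜 → β} (hf : StrictConvexOn 𝕜 s f) {A : Finset 𝕜} (hAs : ↑A ⊆ s)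
    (hA : 2 ≤ #A) (C : Finset β) :
    (#A : ℝ) ^ 11 * #C ^ 3 / (2 ^ 52 * Real.log #A ^ 2) ≤
      #(A.image f + C) ^ 6 * #(A - A) ^ 5 := by
  rcases C.eq_empty_or_nonempty with rfl | hC
  · simp
  obtain ⟨B, hBA, hcard, hB⟩ := exists_subset_strictMonoOn_or_strictAntiOn hf hAs
  have hBne : B.Nonempty := card_pos.1 (by lia)
  have hAB : (#A : ℝ) ≤ 4 * #B := by exact_mod_cast (by lia : #A ≤ 4 * #B)
  have hlog : 1 + Real.log #B ≤ 3 * Real.log #A :=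
    one_add_log_natCast_le hBne.card_pos (card_le_card hBA) hA
  have hlogB : 0 ≤ Real.log #B := Real.log_natCast_nonneg _
  have hS : #(B.image f + C) ≤ #(A.image f + C) :=
    card_le_card (add_subset_add_right (image_subset_image hBA))
  have hD : #(B - B) ≤ #(A - A) := card_le_card (sub_subset_sub hBA hBA)
  have hinj : FwdDiffInjOn f B :=
    (fwdDiffInjOn_of_strictConvexOn hf).mono ((coe_subset.2 hBA).trans hAs)
  have hlogA : 0 < Real.log #A := by linarith
  rw [div_le_iff₀ (by positivity)]
  calc (#A : ℝ) ^ 11 * #C ^ 3 ≤ (4 * #B : ℝ) ^ 11 * #C ^ 3 := by gcongr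
    _ = 4 ^ 11 * ((#B : ℝ) ^ 11 * #C ^ 3) := by ring
    _ ≤ 4 ^ 11 * (2 ^ 26 * (#(B.image f + C) ^ 6 * #(B - B) ^ 5 * (1 + Real.log #B) ^ 2)) := by
      gcongr 4 ^ 11 * ?_
      exact card_pow_mul_card_pow_le hinj hB hBne hC
    _ ≤ 4 ^ 11 * (2 ^ 26 * (#(A.image f + C) ^ 6 * #(A - A) ^ 5 * (3 * Real.log #A) ^ 2)) := by
      gcongr
    _ = 9 * 2 ^ 48 * (#(A.image f + C) ^ 6 * #(A - A) ^ 5 * Real.log #A ^ 2) := by ring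
    _ ≤ 2 ^ 52 * (#(A.image f + C) ^ 6 * #(A - A) ^ 5 * Real.log #A ^ 2) := by
      gcongr
      norm_num
    _ = #(A.image f + C) ^ 6 * #(A - A) ^ 5 * (2 ^ 52 * Real.log #A ^ 2) := by ring

theorem stmt11 : ∃ K : ℝ, 0 < K ∧
    ∀ f : ℝ → ℝ, Continuous f → StrictConvexOn ℝ Set.univ f →
    ∀ A C : Finset ℝ, (A.card : ℝ) / 2 ≤ (C.card : ℝ) → (C.card : ℝ) ≤ 2 * (A.card : ℝ) →
    2 ≤ A.card →
    ((A.image f + C).card : ℝ) ^ 6 * ((A - A).card : ℝ) ^ 5 ≥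
      K * (A.card : ℝ) ^ 14 / (Real.log A.card) ^ 2 := by
  refine ⟨1 / 2 ^ 55, by positivity, fun f _ hf A C hAC _ hA => ?_⟩
  calc 1 / 2 ^ 55 * (#A : ℝ) ^ 14 / Real.log #A ^ 2
      = #A ^ 11 * (#A / 2) ^ 3 / (2 ^ 52 * Real.log #A ^ 2) := by ring
    _ ≤ #A ^ 11 * #C ^ 3 / (2 ^ 52 * Real.log #A ^ 2) := by gcongr
    _ ≤ _ := stmt11_general hf (Set.subset_univ _) hA C
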